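/- Let 1 ≤ p < ∞, let S ⊆ M_N be a complex linear subspace, and let u : S → M_m be a linear map such that for every n ≥ 1 and every x ∈ S ⊗ M_n, ‖(u ⊗ id_{M_n})(x)‖_{S_p^m[M_n]} ≤ ‖x‖_{S_p^N[M_n]}. Then for every v ∈ S ⊗ M_m, viewed as an element of M_N ⊗ M_m, one has |T((u ⊗ id_{M_m})(v))| ≤ ρ_p(v). (Inequality (3.11), the key step in the proof of the extension theorem 3.5, where ρ_p is taken on M_N ⊗ M_m.) -/

import Mathlib

open scoped Kronecker ENNReal Classical ComplexOrder
open Matrix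

noncomputable section

/-- The operator norm (`S_∞` norm) of a complex matrix, acting on Euclidean space. -/
def opNorm {ι : Type} [Fintype ι] [DecidableEq ι] (a : Matrix ι ι ℂ) : ℝ :=
  ‖LinearMap.toContinuousLinearMap (Matrix.toEuclideanLin a)‖

/-- The Schatten `p`-norm of a complex matrix: the `ℓ^p` norm of its singular values
(the square roots of the eigenvalues of `aᴴ * a`); for `p = ∞` it is the operator norm. -/
def schattenNorm {ι : Type} [Fintype ι] [DecidableEq ι] (p : ℝ≥0∞) (a : Matrix ι ι ℂ) : ℝ :=
  if p = ∞ then opNorm a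
  else (∑ i, Real.sqrt ((Matrix.posSemidef_conjTranspose_mul_self a).isHermitian.eigenvalues i) ^ p.toReal)
      ^ (1 / p.toReal)

/-- Pisier's vector-valued Schatten norm `‖x‖_{S_p^N[M_n]}` on `M_N ⊗ M_n`:
the infimum of `‖a‖_{S_{2p}} ‖y‖_{S_∞} ‖b‖_{S_{2p}}` over factorizations
`x = (a ⊗ 1) · y · (b ⊗ 1)`. -/
def pisierNorm (p : ℝ≥0∞) {N n : ℕ} (x : Matrix (Fin N × Fin n) (Fin N × Fin n) ℂ) : ℝ :=
  sInf { r | ∃ (a b : Matrix (Fin N) (Fin N) ℂ)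
      (y : Matrix (Fin N × Fin n) (Fin N × Fin n) ℂ),
      x = (a ⊗ₖ (1 : Matrix (Fin n) (Fin n) ℂ)) * y * (b ⊗ₖ (1 : Matrix (Fin n) (Fin n) ℂ)) ∧
      r = schattenNorm (2 * p) a * opNorm y * schattenNorm (2 * p) b }

/-- The amplification `u ⊗ id_{M_n} : M_N ⊗ M_n → M_m ⊗ M_n` of a map `u : M_N → M_m`,
acting as `u` on each `M_n`-block entry. -/
def amp {N m n : ℕ} (u : Matrix (Fin N) (Fin N) ℂ → Matrix (Fin m) (Fin m) ℂ)
    (x : Matrix (Fin N × Fin n) (Fin N × Fin n) ℂ) : Matrix (Fin m × Fin n) (Fin m × Fin n) ℂ :=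
  Matrix.of fun ik jl => u (Matrix.of fun i j => x (i, ik.2) (j, jl.2)) ik.1 jl.1

/-- The amplification `id_{M_n} ⊗ u : M_n ⊗ M_N → M_n ⊗ M_m` of a map `u : M_N → M_m`. -/
def ampLeft {n N m : ℕ} (u : Matrix (Fin N) (Fin N) ℂ → Matrix (Fin m) (Fin m) ℂ)
    (x : Matrix (Fin n × Fin N) (Fin n × Fin N) ℂ) : Matrix (Fin n × Fin m) (Fin n × Fin m) ℂ :=
  Matrix.of fun ki lj => u (Matrix.of fun i j => x (ki.1, i) (lj.1, j)) ki.2 lj.2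

/-- The trace pairing `T : M_k ⊗ M_k → ℂ`, with `T(a ⊗ b) = tr(ᵗa·b)`; writing
`z` as a `k×k` matrix of blocks `z_{ij} ∈ M_k`, `T(z) = Σ_{i,j} (z_{ij})_{ij}`. -/
def tracePair {k : ℕ} (z : Matrix (Fin k × Fin k) (Fin k × Fin k) ℂ) : ℂ :=
  ∑ i : Fin k, ∑ j : Fin k, z (i, i) (j, j)

/-- A map `u : M_N → M_m` is completely positive if all its amplifications
`id_{M_n} ⊗ u` preserve positive semidefiniteness. -/
def CompletelyPositive {N m : ℕ}
    (u : Matrix (Fin N) (Fin N) ℂ → Matrix (Fin m) (Fin m) ℂ) : Prop :=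
  ∀ (n : ℕ) (x : Matrix (Fin n × Fin N) (Fin n × Fin N) ℂ),
    x.PosSemidef → (ampLeft u x).PosSemidef

/-- The regular norm (relative to `p`) of `u : M_N → M_m`: the supremum in `[0,∞]`
over `n ≥ 1` of the norms of the amplifications `u ⊗ id_{M_n}` from
`(M_N ⊗ M_n, ‖·‖_{S_p^N[M_n]})` to `(M_m ⊗ M_n, ‖·‖_{S_p^m[M_n]})`. -/
def regNorm (p : ℝ≥0∞) {N m : ℕ}
    (u : Matrix (Fin N) (Fin N) ℂ → Matrix (Fin m) (Fin m) ℂ) : ℝ≥0∞ :=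
  ⨆ (n : ℕ) (x : Matrix (Fin N × Fin (n + 1)) (Fin N × Fin (n + 1)) ℂ)
    (_ : pisierNorm p x ≤ 1), ENNReal.ofReal (pisierNorm p (amp u x))

/-- Pisier's norm `ρ_p` on `M_n ⊗ M_m` (with `q` the conjugate exponent `p'`):
the infimum of `‖γ‖_{S_{2p}} ‖α‖_{S_{2p'}} ‖g‖_{S_∞} ‖δ‖_{S_{2p}} ‖β‖_{S_{2p'}}`
over factorizations `a = (γ ⊗ α) · g · (δ ⊗ β)`. -/
def rho (p q : ℝ≥0∞) {n m : ℕ} (a : Matrix (Fin n × Fin m) (Fin n × Fin m) ℂ) : ℝ :=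
  sInf { r | ∃ (γ δ : Matrix (Fin n) (Fin n) ℂ) (α β : Matrix (Fin m) (Fin m) ℂ)
      (g : Matrix (Fin n × Fin m) (Fin n × Fin m) ℂ),
      a = (γ ⊗ₖ α) * g * (δ ⊗ₖ β) ∧
      r = schattenNorm (2 * p) γ * schattenNorm (2 * q) α * opNorm g *
          schattenNorm (2 * p) δ * schattenNorm (2 * q) β }

/-- The amplification `u ⊗ id_{M_n}` of a map `u` defined only on a subspace `S ⊆ M_N`,
applied to an element of `M_N ⊗ M_n` all of whose `M_N`-valued block entries lie in `S`. -/
def ampOn {N m n : ℕ} (S : Submodule ℂ (Matrix (Fin N) (Fin N) ℂ))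
    (u : S →ₗ[ℂ] Matrix (Fin m) (Fin m) ℂ)
    (x : Matrix (Fin N × Fin n) (Fin N × Fin n) ℂ)
    (h : ∀ k l : Fin n, (Matrix.of fun i j => x (i, k) (j, l)) ∈ S) :
    Matrix (Fin m × Fin n) (Fin m × Fin n) ℂ :=
  Matrix.of fun ik jl => u ⟨Matrix.of fun i j => x (i, ik.2) (j, jl.2), h ik.2 jl.2⟩ ik.1 jl.1

end

/-!
Writing `T(z) = vec 1 ⬝ z (vec 1)` turns `T((a ⊗ α) y (b ⊗ β))` into
`vec (αᵀ a) ⬝ y (vec (β bᵀ))`, so it is bounded by `‖y‖` times two Hilbert-Schmidt norms, to which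
the Hölder inequality for Schatten norms applies. The latter reduces to Hölder for the trace of a
product of Hermitian matrices: `tr (A B)` pairs the eigenvalues of `A` and `B` through the matrix
`|Wᵢⱼ|²` of a unitary `W`, which is doubly stochastic, hence by Birkhoff a convex combination of
permutations. This gives `|T((1 ⊗ α) z (1 ⊗ β))| ≤ ‖α‖ ‖β‖ ‖z‖_{S_p[M_m]}`.

For `v = (γ ⊗ α) g (δ ⊗ β)` choose `α'`, `β'` with `α' α` and `β β'` the orthogonal projections
onto the initial space of `α` and the range of `β`. Then `x = (1 ⊗ α') v (1 ⊗ β')` still lies in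
`S ⊗ M_m`, satisfies `v = (1 ⊗ α) x (1 ⊗ β)`, and `‖x‖_{S_p[M_m]} ≤ ‖γ‖ ‖g‖ ‖δ‖`. Since `u ⊗ id`
commutes with multiplication by `1 ⊗ α` and `1 ⊗ β`, the bound for `T` applies to
`z = (u ⊗ id)(x)`.
-/

theorem norm_dotProduct_le_norm_toLp_mul {ι 𝕜 : Type*} [Fintype ι] [RCLike 𝕜] (p q : ℝ≥0∞)
    [p.HolderConjugate q] (x y : ι → 𝕜) :
    ‖x ⬝ᵥ y‖ ≤ ‖WithLp.toLp p x‖ * ‖WithLp.toLp q y‖ := by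
  have : Fact (1 ≤ p) := ⟨ENNReal.HolderConjugate.one_le p q⟩
  have : Fact (1 ≤ q) := ⟨ENNReal.HolderConjugate.one_le q p⟩
  let x' := (lpPiLpₗᵢ (p := p) (fun _ : ι => 𝕜) 𝕜).symm (WithLp.toLp p x)
  let y' := (lpPiLpₗᵢ (p := q) (fun _ : ι => 𝕜) 𝕜).symm (WithLp.toLp q y)
  have h : ‖∑' i, x' i * y' i‖ ≤ (1 : NNReal) * ‖x'‖ * ‖y'‖ :=
    (lp.dualPairing p q (fun _ : ι => ContinuousLinearMap.mul 𝕜 𝕜) (K := 1)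
      (fun _ => ContinuousLinearMap.opNorm_mul_le 𝕜 𝕜)).le_of_opNorm₂_le_of_le
        (lp.norm_dualPairing _ _) le_rfl le_rfl
  simpa only [x', y', LinearIsometryEquiv.norm_map, coe_lpPiLpₗᵢ_symm, tsum_fintype,
    NNReal.coe_one, one_mul, dotProduct] using h

theorem norm_toLp_comp_perm {ι E : Type*} [Fintype ι] [SeminormedAddCommGroup E] (p : ℝ≥0∞)
    [Fact (1 ≤ p)] (σ : Equiv.Perm ι) (x : ι → E) :
    ‖WithLp.toLp p (x ∘ σ)‖ = ‖WithLp.toLp p x‖ :=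
  (LinearIsometryEquiv.piLpCongrLeft p ℤ E σ.symm).norm_map (WithLp.toLp p x)

theorem dotProduct_mulVec_le_of_mem_doublyStochastic {ι : Type*} [Fintype ι] [DecidableEq ι]
    (p q : ℝ≥0∞) [p.HolderConjugate q] {W : Matrix ι ι ℝ} (hW : W ∈ doublyStochastic ℝ ι)
    (x y : ι → ℝ) : x ⬝ᵥ W *ᵥ y ≤ ‖WithLp.toLp p x‖ * ‖WithLp.toLp q y‖ := by
  have : Fact (1 ≤ q) := ⟨ENNReal.HolderConjugate.one_le q p⟩
  have hconv : Convex ℝ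
      {W : Matrix ι ι ℝ | x ⬝ᵥ W *ᵥ y ≤ ‖WithLp.toLp p x‖ * ‖WithLp.toLp q y‖} :=
    convex_halfSpace_le
      ⟨fun V W => by rw [add_mulVec, dotProduct_add],
        fun c W => by rw [smul_mulVec, dotProduct_smul]⟩ _
  rw [← SetLike.mem_coe, doublyStochastic_eq_convexHull_permMatrix] at hW
  refine convexHull_min ?_ hconv hW
  rintro _ ⟨σ, rfl⟩
  rw [Set.mem_ofPred_eq, permMatrix_mulVec, ← norm_toLp_comp_perm q σ y]
  exact (le_abs_self _).trans (norm_dotProduct_le_norm_toLp_mul p q x (y ∘ σ))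

section SpectralTrace

variable {ι : Type*} [Fintype ι] [DecidableEq ι]

theorem of_norm_sq_mem_doublyStochastic {U : Matrix ι ι ℂ} (hU : U ∈ unitaryGroup ι ℂ) :
    (of fun i j => ‖U i j‖ ^ 2) ∈ doublyStochastic ℝ ι := by
  have sum_row : ∀ {V : Matrix ι ι ℂ}, V ∈ unitaryGroup ι ℂ → ∀ i, ∑ j, ‖V i j‖ ^ 2 = 1 := by
    intro V hV i
    have h := congr_fun₂ (mem_unitaryGroup_iff.mp hV) i i
    simp only [star_eq_conjTranspose, mul_apply, conjTranspose_apply, one_apply_eq, RCLike.star_def,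
      RCLike.mul_conj] at h
    exact Complex.ofReal_injective (by push_cast; exact h)
  refine mem_doublyStochastic_iff_sum.mpr ⟨fun i j => sq_nonneg _, sum_row hU, fun j => ?_⟩
  simpa using sum_row (Unitary.star_mem hU) j

theorem trace_mul_diagonal_mul_conjTranspose_mul_diagonal (W : Matrix ι ι ℂ) (x y : ι → ℝ) :
    trace (diagonal (RCLike.ofReal ∘ x) * (W * diagonal (RCLike.ofReal ∘ y) * Wᴴ)) =
      ((x ⬝ᵥ (of fun i j => ‖W i j‖ ^ 2) *ᵥ y : ℝ) : ℂ) := by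
  simp only [trace, diag_apply, diagonal_mul, mul_apply (M := W * _), mul_diagonal, dotProduct,
    mulVec, conjTranspose_apply, Function.comp_apply, of_apply, Complex.ofReal_sum,
    Complex.ofReal_mul]
  refine Finset.sum_congr rfl fun i _ => congrArg _ (Finset.sum_congr rfl fun j _ => ?_)
  rw [mul_right_comm, RCLike.star_def, Complex.mul_conj', Complex.ofReal_pow]
  rfl

theorem trace_mul_eq_eigenvalues_dotProduct {A B : Matrix ι ι ℂ}
    (hA : A.IsHermitian) (hB : B.IsHermitian) :
    ∃ W ∈ doublyStochastic ℝ ι,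
      trace (A * B) = ((hA.eigenvalues ⬝ᵥ W *ᵥ hB.eigenvalues : ℝ) : ℂ) := by
  let W := star hA.eigenvectorUnitary * hB.eigenvectorUnitary
  refine ⟨_, of_norm_sq_mem_doublyStochastic W.2, ?_⟩
  rw [← trace_mul_diagonal_mul_conjTranspose_mul_diagonal]
  conv_lhs => rw [hA.spectral_theorem, hB.spectral_theorem]
  simp only [Unitary.conjStarAlgAut_apply, W]
  rw [Matrix.mul_assoc, Matrix.mul_assoc, trace_mul_comm]
  simp [Matrix.mul_assoc, star_eq_conjTranspose]

end SpectralTrace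

theorem re_trace_mul_le_norm_toLp_eigenvalues {ι : Type*} [Fintype ι] [DecidableEq ι]
    (p q : ℝ≥0∞) [p.HolderConjugate q] {A B : Matrix ι ι ℂ} (hA : A.IsHermitian)
    (hB : B.IsHermitian) :
    (trace (A * B)).re ≤ ‖WithLp.toLp p hA.eigenvalues‖ * ‖WithLp.toLp q hB.eigenvalues‖ := by
  obtain ⟨W, hW, h⟩ := trace_mul_eq_eigenvalues_dotProduct hA hB
  rw [h, Complex.ofReal_re]
  exact dotProduct_mulVec_le_of_mem_doublyStochastic p q hW _ _

open scoped Matrix.Norms.L2Operator in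
theorem norm_eq_norm_toLp_top_eigenvalues {ι : Type*} [Fintype ι] [DecidableEq ι]
    {A : Matrix ι ι ℂ} (hA : A.IsHermitian) : ‖A‖ = ‖WithLp.toLp ∞ hA.eigenvalues‖ := by
  conv_lhs => rw [hA.spectral_theorem, Unitary.conjStarAlgAut_apply, ← Unitary.coe_star,
    CStarRing.norm_mul_coe_unitary, CStarRing.norm_coe_unitary_mul, l2_opNorm_diagonal]
  rw [PiLp.norm_toLp]
  simp [Pi.norm_def, Function.comp_def]

theorem norm_toLp_vec_sq {m n : Type*} [Fintype m] [Fintype n] (x : Matrix m n ℂ) :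
    ‖WithLp.toLp 2 (vec x)‖ ^ 2 = (trace (xᴴ * x)).re := by
  rw [← star_vec_dotProduct_vec, dotProduct_comm, ← EuclideanSpace.inner_toLp_toLp]
  exact (inner_self_eq_norm_sq (𝕜 := ℂ) _).symm

theorem vec_one_dotProduct_kronecker_mul_mulVec {ι κ R : Type*} [Fintype ι] [Fintype κ]
    [DecidableEq ι] [DecidableEq κ] [CommSemiring R] (a α : Matrix ι ι R) (b β : Matrix κ κ R)
    (y : Matrix (ι × ι) (κ × κ) R) :
    vec 1 ⬝ᵥ ((a ⊗ₖ α) * y * (b ⊗ₖ β)) *ᵥ vec 1 = vec (αᵀ * a) ⬝ᵥ y *ᵥ vec (β * bᵀ) := by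
  rw [← mulVec_mulVec, ← mulVec_mulVec, dotProduct_mulVec, vec_vecMul_kronecker,
    kronecker_mulVec_vec, Matrix.mul_one, Matrix.mul_one]

section SchattenNorm

variable {ι : Type} [Fintype ι] [DecidableEq ι]

/-- The squared singular values of `a`, that is, the eigenvalues of `aᴴ * a` with multiplicity. -/
noncomputable def sqSingularValues (a : Matrix ι ι ℂ) : ι → ℝ :=
  (posSemidef_conjTranspose_mul_self a).isHermitian.eigenvalues

theorem sqSingularValues_nonneg (a : Matrix ι ι ℂ) (i : ι) : 0 ≤ sqSingularValues a i :=
  (posSemidef_conjTranspose_mul_self a).eigenvalues_nonneg i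

theorem opNorm_nonneg (a : Matrix ι ι ℂ) : 0 ≤ opNorm a := norm_nonneg _

theorem schattenNorm_nonneg (p : ℝ≥0∞) (a : Matrix ι ι ℂ) : 0 ≤ schattenNorm p a := by
  unfold schattenNorm
  split_ifs
  · exact opNorm_nonneg a
  · positivity

open scoped Matrix.Norms.L2Operator in
theorem opNorm_sq (a : Matrix ι ι ℂ) : opNorm a ^ 2 = ‖WithLp.toLp ∞ (sqSingularValues a)‖ := by
  rw [sqSingularValues, ← norm_eq_norm_toLp_top_eigenvalues, l2_opNorm_conjTranspose_mul_self, sq]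
  rfl

theorem schattenNorm_two_mul_sq (p : ℝ≥0∞) [Fact (1 ≤ p)] (a : Matrix ι ι ℂ) :
    schattenNorm (2 * p) a ^ 2 = ‖WithLp.toLp p (sqSingularValues a)‖ := by
  rcases eq_or_ne p ∞ with rfl | hp
  · rw [schattenNorm, ENNReal.mul_top two_ne_zero, if_pos rfl, opNorm_sq]
  have hp0 : 0 < p.toReal := ENNReal.toReal_pos (zero_lt_one.trans_le Fact.out).ne' hp
  have rpow_two_mul : ∀ i, √(sqSingularValues a i) ^ (2 * p).toReal =
      ‖sqSingularValues a i‖ ^ p.toReal := fun i => by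
    rw [ENNReal.toReal_mul, ENNReal.toReal_ofNat, Real.rpow_mul (Real.sqrt_nonneg _), Real.rpow_two,
      Real.sq_sqrt (sqSingularValues_nonneg a i), Real.norm_of_nonneg (sqSingularValues_nonneg a i)]
  rw [schattenNorm, if_neg (ENNReal.mul_ne_top ENNReal.ofNat_ne_top hp), PiLp.norm_eq_sum hp0,
    ← Finset.sum_congr rfl fun i _ => rpow_two_mul i, ← Real.rpow_natCast, ← Real.rpow_mul]
  · rw [ENNReal.toReal_mul]
    congr 1
    simp
  · positivity

theorem schattenNorm_eq_of_charpoly_eq (p : ℝ≥0∞) {a b : Matrix ι ι ℂ}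
    (h : (aᴴ * a).charpoly = (bᴴ * b).charpoly) : schattenNorm p a = schattenNorm p b := by
  have heig : sqSingularValues a = sqSingularValues b :=
    (IsHermitian.eigenvalues_eq_eigenvalues_iff _ _).mpr h
  have hop : opNorm a = opNorm b := by
    rw [← sq_eq_sq₀ (opNorm_nonneg a) (opNorm_nonneg b), opNorm_sq, opNorm_sq, heig]
  unfold sqSingularValues at heig
  rw [schattenNorm, schattenNorm, hop, heig]

theorem schattenNorm_conjTranspose (p : ℝ≥0∞) (a : Matrix ι ι ℂ) :
    schattenNorm p aᴴ = schattenNorm p a :=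
  schattenNorm_eq_of_charpoly_eq p <| by rw [conjTranspose_conjTranspose, charpoly_mul_comm]

theorem schattenNorm_transpose (p : ℝ≥0∞) (a : Matrix ι ι ℂ) :
    schattenNorm p aᵀ = schattenNorm p a :=
  schattenNorm_eq_of_charpoly_eq p <| by
    rw [← charpoly_transpose, transpose_mul, transpose_transpose, charpoly_mul_comm]
    rfl

theorem norm_toLp_vec_mul_le (p q : ℝ≥0∞) [p.HolderConjugate q] (a b : Matrix ι ι ℂ) :
    ‖WithLp.toLp 2 (vec (a * b))‖ ≤ schattenNorm (2 * p) a * schattenNorm (2 * q) b := by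
  have : Fact (1 ≤ p) := ⟨ENNReal.HolderConjugate.one_le p q⟩
  have : Fact (1 ≤ q) := ⟨ENNReal.HolderConjugate.one_le q p⟩
  refine le_of_sq_le_sq ?_ (mul_nonneg (schattenNorm_nonneg _ _) (schattenNorm_nonneg _ _))
  calc ‖WithLp.toLp 2 (vec (a * b))‖ ^ 2 = (trace ((a * b)ᴴ * (a * b))).re :=
        norm_toLp_vec_sq _
    _ = (trace (aᴴ * a * (bᴴᴴ * bᴴ))).re := by
        rw [conjTranspose_conjTranspose, conjTranspose_mul, Matrix.mul_assoc, trace_mul_comm]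
        simp only [Matrix.mul_assoc]
    _ ≤ ‖WithLp.toLp p (sqSingularValues a)‖ * ‖WithLp.toLp q (sqSingularValues bᴴ)‖ :=
        re_trace_mul_le_norm_toLp_eigenvalues p q _ _
    _ = (schattenNorm (2 * p) a * schattenNorm (2 * q) b) ^ 2 := by
        rw [← schattenNorm_two_mul_sq, ← schattenNorm_two_mul_sq, schattenNorm_conjTranspose,
          mul_pow]

theorem norm_dotProduct_mulVec_le (x y : ι → ℂ) (a : Matrix ι ι ℂ) :
    ‖x ⬝ᵥ a *ᵥ y‖ ≤ ‖WithLp.toLp 2 x‖ * opNorm a * ‖WithLp.toLp 2 y‖ := by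
  rw [mul_assoc]
  exact (norm_dotProduct_le_norm_toLp_mul 2 2 x _).trans
    (mul_le_mul_of_nonneg_left (l2_opNorm_mulVec a (WithLp.toLp 2 y)) (norm_nonneg _))

end SchattenNorm

theorem tracePair_eq_vec_one_dotProduct {k : ℕ} (z : Matrix (Fin k × Fin k) (Fin k × Fin k) ℂ) :
    tracePair z = vec 1 ⬝ᵥ z *ᵥ vec 1 := by
  simp [tracePair, dotProduct, mulVec, vec, Fintype.sum_prod_type, one_apply]

theorem norm_tracePair_kronecker_mul_le {k : ℕ} (p q : ℝ≥0∞) [p.HolderConjugate q]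
    (a b α β : Matrix (Fin k) (Fin k) ℂ) (y : Matrix (Fin k × Fin k) (Fin k × Fin k) ℂ) :
    ‖tracePair ((a ⊗ₖ α) * y * (b ⊗ₖ β))‖ ≤
      schattenNorm (2 * p) a * schattenNorm (2 * q) α * opNorm y *
        (schattenNorm (2 * p) b * schattenNorm (2 * q) β) := by
  have hl : ‖WithLp.toLp 2 (vec (αᵀ * a))‖ ≤ schattenNorm (2 * p) a * schattenNorm (2 * q) α := by
    rw [mul_comm, ← schattenNorm_transpose _ α]
    exact norm_toLp_vec_mul_le q p _ _
  have hr : ‖WithLp.toLp 2 (vec (β * bᵀ))‖ ≤ schattenNorm (2 * p) b * schattenNorm (2 * q) β := by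
    rw [mul_comm, ← schattenNorm_transpose _ b]
    exact norm_toLp_vec_mul_le q p _ _
  rw [tracePair_eq_vec_one_dotProduct, vec_one_dotProduct_kronecker_mul_mulVec]
  refine (norm_dotProduct_mulVec_le _ _ _).trans ?_
  exact mul_le_mul (mul_le_mul_of_nonneg_right hl (opNorm_nonneg y)) hr (norm_nonneg _)
    (mul_nonneg ((norm_nonneg _).trans hl) (opNorm_nonneg y))

section GeneralizedInverse

variable {𝕜 E F : Type*} [RCLike 𝕜] [NormedAddCommGroup E] [InnerProductSpace 𝕜 E]
  [AddCommGroup F] [Module 𝕜 F] (T : E →ₗ[𝕜] F) [T.ker.HasOrthogonalProjection]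

theorem apply_starProjection_ker_orthogonal (x : E) : T (T.kerᗮ.starProjection x) = T x := by
  have h : T (T.ker.starProjection x) = 0 := T.ker.starProjection_apply_mem x
  rw [T.ker.starProjection_orthogonal', _root_.sub_apply, map_sub, h, sub_zero]
  rfl

theorem exists_leftInverse_eq_starProjection_ker_orthogonal :
    ∃ T' : F →ₗ[𝕜] E, ∀ x, T' (T x) = T.kerᗮ.starProjection x := by
  have hinj : Function.Injective (T.domRestrict T.kerᗮ) :=
    LinearMap.injective_domRestrict_iff.mpr T.ker.orthogonal_disjoint.symm
  obtain ⟨L, hL⟩ := LinearMap.exists_leftInverse_of_injective _ (LinearMap.ker_eq_bot.mpr hinj)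
  refine ⟨T.kerᗮ.subtype ∘ₗ L, fun x => ?_⟩
  rw [← apply_starProjection_ker_orthogonal]
  exact congrArg Subtype.val (LinearMap.congr_fun hL (T.kerᗮ.orthogonalProjectionOnto x))

end GeneralizedInverse

theorem exists_mul_isStarProjection {ι : Type*} [Fintype ι] (a : Matrix ι ι ℂ) :
    ∃ a' : Matrix ι ι ℂ, IsStarProjection (a' * a) ∧ a * (a' * a) = a := by
  let Φ := toEuclideanCLM (n := ι) (𝕜 := ℂ)
  let T := toEuclideanLin a
  obtain ⟨T', hT'⟩ := exists_leftInverse_eq_starProjection_ker_orthogonal T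
  have hP : Φ (Φ.symm T'.toContinuousLinearMap * a) = T.kerᗮ.starProjection := by
    rw [map_mul, Φ.apply_symm_apply]
    exact ContinuousLinearMap.ext hT'
  have hproj : IsStarProjection T.kerᗮ.starProjection := isStarProjection_starProjection
  have hΦ := EquivLike.injective Φ
  refine ⟨Φ.symm T'.toContinuousLinearMap, ⟨hΦ ?_, hΦ ?_⟩, hΦ ?_⟩
  · rw [map_mul, hP, hproj.isIdempotentElem.eq]
  · rw [map_star, hP, hproj.isSelfAdjoint.star_eq]
  · rw [map_mul, hP]
    exact ContinuousLinearMap.ext (apply_starProjection_ker_orthogonal T)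

theorem exists_mul_isStarProjection_left {ι : Type*} [Fintype ι] (b : Matrix ι ι ℂ) :
    ∃ b' : Matrix ι ι ℂ, IsStarProjection (b * b') ∧ b * b' * b = b := by
  obtain ⟨c, hproj, hmul⟩ := exists_mul_isStarProjection bᴴ
  have hbc : b * cᴴ = c * bᴴ := by
    simpa [star_eq_conjTranspose] using hproj.isSelfAdjoint.star_eq
  refine ⟨cᴴ, hbc ▸ hproj, conjTranspose_injective ?_⟩
  rw [hbc, conjTranspose_mul, ← star_eq_conjTranspose (c * bᴴ), hproj.isSelfAdjoint.star_eq, hmul]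

open scoped Matrix.Norms.L2Operator in
theorem opNorm_one_kronecker_le_one_of_isStarProjection {ι κ : Type} [Fintype ι] [DecidableEq ι]
    [Fintype κ] [DecidableEq κ] {P : Matrix κ κ ℂ} (hP : IsStarProjection P) :
    opNorm ((1 : Matrix ι ι ℂ) ⊗ₖ P) ≤ 1 := by
  refine IsStarProjection.norm_le (E := Matrix (ι × κ) (ι × κ) ℂ) _ ⟨?_, ?_⟩
  · rw [IsIdempotentElem, ← mul_kronecker_mul, Matrix.one_mul, hP.isIdempotentElem.eq]
  · rw [isSelfAdjoint_iff, star_eq_conjTranspose, conjTranspose_kronecker, conjTranspose_one,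
      ← star_eq_conjTranspose, hP.isSelfAdjoint.star_eq]

theorem submatrix_one_kronecker_mul {ι ι' κ κ' μ μ' R : Type*} [Fintype ι] [DecidableEq ι]
    [Fintype ι'] [DecidableEq ι'] [Fintype κ'] [Fintype μ'] [CommSemiring R] (α : Matrix κ κ' R)
    (x : Matrix (ι × κ') (ι' × μ') R) (β : Matrix μ' μ R) (k : κ) (l : μ) :
    ((1 : Matrix ι ι R) ⊗ₖ α * x * (1 : Matrix ι' ι' R) ⊗ₖ β).submatrix (·, k) (·, l) =
      ∑ k', ∑ l', (α k k' * β l' l) • x.submatrix (·, k') (·, l') := by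
  ext i j
  simp only [submatrix_apply, mul_apply, Fintype.sum_prod_type, kroneckerMap_apply, one_apply,
    Matrix.sum_apply, Matrix.smul_apply, smul_eq_mul, Finset.sum_mul, ite_mul, one_mul, zero_mul,
    mul_ite, mul_zero, Finset.sum_ite_irrel, Finset.sum_const_zero, Finset.sum_ite_eq,
    Finset.sum_ite_eq', Finset.mem_univ, if_true]
  rw [Finset.sum_comm]
  simp only [mul_right_comm]

section Amplification

variable {N m n : ℕ} (S : Submodule ℂ (Matrix (Fin N) (Fin N) ℂ))

theorem submatrix_one_kronecker_mul_mem (α β : Matrix (Fin n) (Fin n) ℂ)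
    {x : Matrix (Fin N × Fin n) (Fin N × Fin n) ℂ}
    (hx : ∀ k l, x.submatrix (·, k) (·, l) ∈ S) (k l : Fin n) :
    ((1 : Matrix _ _ ℂ) ⊗ₖ α * x * (1 : Matrix _ _ ℂ) ⊗ₖ β).submatrix (·, k) (·, l) ∈ S := by
  rw [submatrix_one_kronecker_mul]
  exact S.sum_mem fun k' _ => S.sum_mem fun l' _ => S.smul_mem _ (hx k' l')

theorem submatrix_ampOn (u : S →ₗ[ℂ] Matrix (Fin m) (Fin m) ℂ)
    (x : Matrix (Fin N × Fin n) (Fin N × Fin n) ℂ)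
    (hx : ∀ k l, x.submatrix (·, k) (·, l) ∈ S) (k l : Fin n) :
    (ampOn S u x hx).submatrix (·, k) (·, l) = u ⟨x.submatrix (·, k) (·, l), hx k l⟩ :=
  rfl

theorem ampOn_one_kronecker_mul (u : S →ₗ[ℂ] Matrix (Fin m) (Fin m) ℂ)
    (α β : Matrix (Fin n) (Fin n) ℂ) {x v : Matrix (Fin N × Fin n) (Fin N × Fin n) ℂ}
    (hx : ∀ k l, x.submatrix (·, k) (·, l) ∈ S) (hv : ∀ k l, v.submatrix (·, k) (·, l) ∈ S)
    (hvx : v = (1 ⊗ₖ α) * x * (1 ⊗ₖ β)) :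
    ampOn S u v hv = (1 ⊗ₖ α) * ampOn S u x hx * (1 ⊗ₖ β) := by
  ext ⟨i, k⟩ ⟨j, l⟩
  have hblock : (⟨v.submatrix (·, k) (·, l), hv k l⟩ : S) =
      ∑ k', ∑ l', (α k k' * β l' l) • ⟨x.submatrix (·, k') (·, l'), hx k' l'⟩ :=
    Subtype.ext <| by
      simp only [hvx, submatrix_one_kronecker_mul, Submodule.coe_sum, Submodule.coe_smul]
  suffices h : (ampOn S u v hv).submatrix (·, k) (·, l) =
      ((1 : Matrix _ _ ℂ) ⊗ₖ α * ampOn S u x hx * (1 : Matrix _ _ ℂ) ⊗ₖ β).submatrix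
        (·, k) (·, l) from congr_fun₂ h i j
  simp only [submatrix_ampOn, hblock, submatrix_one_kronecker_mul, map_sum, map_smul]

end Amplification

section PisierNorm

theorem pisierNorm_le {N n : ℕ} (p : ℝ≥0∞) (a b : Matrix (Fin N) (Fin N) ℂ)
    (y : Matrix (Fin N × Fin n) (Fin N × Fin n) ℂ) :
    pisierNorm p ((a ⊗ₖ 1) * y * (b ⊗ₖ 1)) ≤
      schattenNorm (2 * p) a * opNorm y * schattenNorm (2 * p) b := by
  refine csInf_le ⟨0, ?_⟩ ⟨a, b, y, rfl, rfl⟩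
  rintro _ ⟨a, b, y, -, rfl⟩
  exact mul_nonneg (mul_nonneg (schattenNorm_nonneg _ _) (opNorm_nonneg _))
    (schattenNorm_nonneg _ _)

theorem le_mul_pisierNorm {N n : ℕ} {p : ℝ≥0∞} {x : Matrix (Fin N × Fin n) (Fin N × Fin n) ℂ}
    {r c : ℝ} (hc : 0 ≤ c)
    (h : ∀ a b y, x = (a ⊗ₖ 1) * y * (b ⊗ₖ 1) →
      r ≤ c * (schattenNorm (2 * p) a * opNorm y * schattenNorm (2 * p) b)) :
    r ≤ c * pisierNorm p x := by
  rw [pisierNorm, ← smul_eq_mul, ← Real.sInf_smul_of_nonneg hc]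
  refine le_csInf (Set.Nonempty.smul_set ⟨_, 1, 1, x, by simp, rfl⟩) ?_
  rintro _ ⟨_, ⟨a, b, y, hx, rfl⟩, rfl⟩
  exact h a b y hx

theorem norm_tracePair_one_kronecker_mul_le {k : ℕ} (p q : ℝ≥0∞) [p.HolderConjugate q]
    (α β : Matrix (Fin k) (Fin k) ℂ) (z : Matrix (Fin k × Fin k) (Fin k × Fin k) ℂ) :
    ‖tracePair ((1 ⊗ₖ α) * z * (1 ⊗ₖ β))‖ ≤
      schattenNorm (2 * q) α * schattenNorm (2 * q) β * pisierNorm p z := by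
  refine le_mul_pisierNorm (mul_nonneg (schattenNorm_nonneg _ _) (schattenNorm_nonneg _ _)) ?_
  rintro a b y rfl
  have hfac : (1 ⊗ₖ α) * ((a ⊗ₖ 1) * y * (b ⊗ₖ 1)) * (1 ⊗ₖ β) = (a ⊗ₖ α) * y * (b ⊗ₖ β) := by
    calc _ = ((1 ⊗ₖ α) * (a ⊗ₖ 1)) * y * ((b ⊗ₖ 1) * (1 ⊗ₖ β)) := by
          simp only [Matrix.mul_assoc]
      _ = _ := by simp only [← mul_kronecker_mul, Matrix.one_mul, Matrix.mul_one]
  rw [hfac]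
  exact (norm_tracePair_kronecker_mul_le p q a b α β y).trans_eq (by ring)

theorem opNorm_one_kronecker_mul_mul_le {ι κ : Type} [Fintype ι] [DecidableEq ι] [Fintype κ]
    [DecidableEq κ] {P Q : Matrix κ κ ℂ} (hP : IsStarProjection P) (hQ : IsStarProjection Q)
    (g : Matrix (ι × κ) (ι × κ) ℂ) : opNorm ((1 ⊗ₖ P) * g * (1 ⊗ₖ Q)) ≤ opNorm g := by
  calc opNorm ((1 ⊗ₖ P) * g * (1 ⊗ₖ Q))
      ≤ opNorm (1 ⊗ₖ P) * opNorm g * opNorm (1 ⊗ₖ Q) :=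
        (l2_opNorm_mul _ _).trans
          (mul_le_mul_of_nonneg_right (l2_opNorm_mul _ _) (opNorm_nonneg _))
    _ ≤ 1 * opNorm g * 1 := by
        have := opNorm_nonneg g
        have := opNorm_nonneg ((1 : Matrix ι ι ℂ) ⊗ₖ Q)
        gcongr
        · exact opNorm_one_kronecker_le_one_of_isStarProjection hP
        · exact opNorm_one_kronecker_le_one_of_isStarProjection hQ
    _ = opNorm g := by ring

theorem exists_one_kronecker_mul_pisierNorm_le {N n : ℕ} (p : ℝ≥0∞)
    (γ δ : Matrix (Fin N) (Fin N) ℂ) (α β : Matrix (Fin n) (Fin n) ℂ)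
    (g : Matrix (Fin N × Fin n) (Fin N × Fin n) ℂ) {v} (hv : v = (γ ⊗ₖ α) * g * (δ ⊗ₖ β)) :
    ∃ α' β' : Matrix (Fin n) (Fin n) ℂ,
      v = (1 ⊗ₖ α) * ((1 ⊗ₖ α') * v * (1 ⊗ₖ β')) * (1 ⊗ₖ β) ∧
      pisierNorm p ((1 ⊗ₖ α') * v * (1 ⊗ₖ β')) ≤
        schattenNorm (2 * p) γ * opNorm g * schattenNorm (2 * p) δ := by
  obtain ⟨α', hP, hα⟩ := exists_mul_isStarProjection α
  obtain ⟨β', hQ, hβ⟩ := exists_mul_isStarProjection_left β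
  refine ⟨α', β', ?_, ?_⟩
  · calc v = (γ ⊗ₖ (α * (α' * α))) * g * (δ ⊗ₖ (β * β' * β)) := by rw [hα, hβ, hv]
      _ = ((1 ⊗ₖ α) * (1 ⊗ₖ α') * (γ ⊗ₖ α)) * g * ((δ ⊗ₖ β) * (1 ⊗ₖ β') * (1 ⊗ₖ β)) := by
          simp only [← mul_kronecker_mul, Matrix.one_mul, Matrix.mul_one, Matrix.mul_assoc]
      _ = _ := by rw [hv]; simp only [Matrix.mul_assoc]
  · have hfac : (1 ⊗ₖ α') * v * (1 ⊗ₖ β') =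
        (γ ⊗ₖ 1) * ((1 ⊗ₖ (α' * α)) * g * (1 ⊗ₖ (β * β'))) * (δ ⊗ₖ 1) := by
      calc _ = ((1 ⊗ₖ α') * (γ ⊗ₖ α)) * g * ((δ ⊗ₖ β) * (1 ⊗ₖ β')) := by
            rw [hv]; simp only [Matrix.mul_assoc]
        _ = ((γ ⊗ₖ 1) * (1 ⊗ₖ (α' * α))) * g * ((1 ⊗ₖ (β * β')) * (δ ⊗ₖ 1)) := by
            simp only [← mul_kronecker_mul, Matrix.one_mul, Matrix.mul_one]
        _ = _ := by simp only [Matrix.mul_assoc]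
    rw [hfac]
    refine (pisierNorm_le p γ δ _).trans ?_
    have := schattenNorm_nonneg (2 * p) γ
    have := schattenNorm_nonneg (2 * p) δ
    gcongr
    exact opNorm_one_kronecker_mul_mul_le hP hQ g

end PisierNorm

theorem rho_nonneg (p q : ℝ≥0∞) {n m : ℕ} (a : Matrix (Fin n × Fin m) (Fin n × Fin m) ℂ) :
    0 ≤ rho p q a := by
  refine Real.sInf_nonneg ?_
  rintro _ ⟨γ, δ, α, β, g, -, rfl⟩
  have hγ := schattenNorm_nonneg (2 * p) γ
  have hδ := schattenNorm_nonneg (2 * p) δ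
  have hα := schattenNorm_nonneg (2 * q) α
  have hβ := schattenNorm_nonneg (2 * q) β
  have hg := opNorm_nonneg g
  positivity

theorem abs_trace_pairing_le_rho_of_subspace_general {N m : ℕ} (p q : ℝ≥0∞)
    (hpq : p⁻¹ + q⁻¹ = 1) (S : Submodule ℂ (Matrix (Fin N) (Fin N) ℂ))
    (u : S →ₗ[ℂ] Matrix (Fin m) (Fin m) ℂ)
    (hb : ∀ (x : Matrix (Fin N × Fin m) (Fin N × Fin m) ℂ)
      (h : ∀ k l : Fin m, (Matrix.of fun i j => x (i, k) (j, l)) ∈ S),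
      pisierNorm p (ampOn S u x h) ≤ pisierNorm p x)
    (v : Matrix (Fin N × Fin m) (Fin N × Fin m) ℂ)
    (h : ∀ k l : Fin m, (Matrix.of fun i j => v (i, k) (j, l)) ∈ S) :
    ‖tracePair (ampOn S u v h)‖ ≤ rho p q v := by
  have : p.HolderConjugate q := ENNReal.holderConjugate_iff.mpr hpq
  refine le_csInf ⟨_, 1, 1, 1, 1, v, by simp, rfl⟩ ?_
  rintro _ ⟨γ, δ, α, β, g, hv, rfl⟩
  obtain ⟨α', β', hvx, hx⟩ := exists_one_kronecker_mul_pisierNorm_le p γ δ α β g hv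
  have hxS := submatrix_one_kronecker_mul_mem S α' β' h
  have hamp := ampOn_one_kronecker_mul S u α β hxS h hvx
  calc ‖tracePair (ampOn S u v h)‖
      ≤ schattenNorm (2 * q) α * schattenNorm (2 * q) β * pisierNorm p (ampOn S u _ hxS) :=
        hamp ▸ norm_tracePair_one_kronecker_mul_le p q α β _
    _ ≤ schattenNorm (2 * q) α * schattenNorm (2 * q) β *
          (schattenNorm (2 * p) γ * opNorm g * schattenNorm (2 * p) δ) :=
        mul_le_mul_of_nonneg_left ((hb _ hxS).trans hx)
          (mul_nonneg (schattenNorm_nonneg _ _) (schattenNorm_nonneg _ _))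
    _ = _ := by ring

/-- Inequality (3.11), the key step in the proof of the extension theorem 3.5. -/
theorem abs_trace_pairing_le_rho_of_subspace {N m : ℕ} (p q : ℝ≥0∞) (hp : 1 ≤ p)
    (hptop : p ≠ ∞) (hpq : p⁻¹ + q⁻¹ = 1)
    (S : Submodule ℂ (Matrix (Fin N) (Fin N) ℂ))
    (u : S →ₗ[ℂ] Matrix (Fin m) (Fin m) ℂ)
    (hb : ∀ (n : ℕ), 1 ≤ n → ∀ (x : Matrix (Fin N × Fin n) (Fin N × Fin n) ℂ)
      (h : ∀ k l : Fin n, (Matrix.of fun i j => x (i, k) (j, l)) ∈ S),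
      pisierNorm p (ampOn S u x h) ≤ pisierNorm p x) :
    ∀ (v : Matrix (Fin N × Fin m) (Fin N × Fin m) ℂ)
      (h : ∀ k l : Fin m, (Matrix.of fun i j => v (i, k) (j, l)) ∈ S),
      ‖tracePair (ampOn S u v h)‖ ≤ rho p q v := by
  rcases m.eq_zero_or_pos with rfl | hm
  exacts [fun v _ => by simpa [tracePair] using rho_nonneg p q v,
    abs_trace_pairing_le_rho_of_subspace_general p q hpq S u (hb m hm)]
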